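/- First variation of the action of a solution reduces to a boundary term (equation (10)). Let Ω ⊂ ℝⁿ be a closed axis-aligned box (so the divergence theorem applies on Ω), and suppose Φ satisfies the Euler–Lagrange equations E_B(x) = 0 for all x ∈ Ω and all B. Then for every smooth variation δΦ_B : ℝⁿ → ℝ (with no boundary condition imposed), d/dε|_{ε=0} ∫_Ω L(x, jet(Φ+εδΦ)(x)) dⁿx = ∫_{∂Ω} n_λ(x) Σ_{B=1}^{f} Σ_{Z=0}^{N−1} (∂_{ν₁}⋯∂_{ν_Z} δΦ_B)(x) · K^{Bλν₁…ν_Z}(x) ds(x), where n is the outward unit normal on ∂Ω and ds the surface measure; i.e. the first variation of the action among real movements is determined entirely by the boundary data. -/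

import Mathlib

open scoped BigOperators

/-- Index of a jet variable: derivative order `X ≤ N`, field index `B`,
and a multi-index of coordinate directions of length `X`. -/
abbrev JIdx (n f N : ℕ) : Type := Σ X : Fin (N + 1), Fin f × (Fin (X : ℕ) → Fin n)

/-- The (finite-dimensional) space of jet variables `q = (q^X_{B,λ₁…λ_X})`. -/
abbrev Jet (n f N : ℕ) : Type := JIdx n f N → ℝ

/-- Partial derivative in the `i`-th coordinate direction. -/
noncomputable def pd {n : ℕ} (i : Fin n) (F : (Fin n → ℝ) → ℝ) (x : Fin n → ℝ) : ℝ :=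
  fderiv ℝ F x (Pi.single i 1)

/-- Iterated partial derivative along a list of coordinate directions. -/
noncomputable def pds {n : ℕ} : List (Fin n) → ((Fin n → ℝ) → ℝ) → (Fin n → ℝ) → ℝ
  | [], F => F
  | i :: l, F => pd i (pds l F)

/-- The `N`-jet of the family of fields `Φ` at the point `x`:
the collection `(Φ_B(x), ∂Φ_B(x), …, ∂^N Φ_B(x))`. -/
noncomputable def jet {n f N : ℕ} (Φ : Fin f → (Fin n → ℝ) → ℝ) (x : Fin n → ℝ) :
    Jet n f N :=
  fun idx => pds (List.ofFn idx.2.2) (Φ idx.2.1) x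

/-- `∂L/∂q_idx` evaluated along the jet of `Φ`. -/
noncomputable def dLdq {n f N : ℕ} (L : (Fin n → ℝ) → Jet n f N → ℝ)
    (Φ : Fin f → (Fin n → ℝ) → ℝ) (idx : JIdx n f N) (x : Fin n → ℝ) : ℝ :=
  fderiv ℝ (L x) (jet Φ x) (Pi.single idx 1)

/-- The jet with the multi-index of the order-`X` variables permuted by `σ`. -/
def permJet {n f N : ℕ} (X : Fin (N + 1)) (σ : Equiv.Perm (Fin (X : ℕ)))
    (q : Jet n f N) : Jet n f N :=
  fun idx =>
    if h : idx.1 = X then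
      q ⟨idx.1, idx.2.1, fun i =>
        idx.2.2 (Fin.cast (congrArg Fin.val h).symm (σ (Fin.cast (congrArg Fin.val h) i)))⟩
    else q idx

/-- The Euler–Lagrange expression `E_B(x)`. -/
noncomputable def EulerLagrange {n f N : ℕ} (L : (Fin n → ℝ) → Jet n f N → ℝ)
    (Φ : Fin f → (Fin n → ℝ) → ℝ) (B : Fin f) (x : Fin n → ℝ) : ℝ :=
  ∑ X : Fin (N + 1), ∑ lam : Fin (X : ℕ) → Fin n,
    (-1 : ℝ) ^ (X : ℕ) * pds (List.ofFn lam) (dLdq L Φ ⟨X, B, lam⟩) x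

/-- The coefficients `K^{Bλν₁…ν_Z}(x)` of the boundary/divergence term. -/
noncomputable def Kcur {n f N : ℕ} (L : (Fin n → ℝ) → Jet n f N → ℝ)
    (Φ : Fin f → (Fin n → ℝ) → ℝ) (B : Fin f) (lam : Fin n) (Z : Fin N)
    (nu : Fin (Z : ℕ) → Fin n) (x : Fin n → ℝ) : ℝ :=
  ∑ Y : Fin (N - (Z : ℕ)), ∑ mu : Fin (Y : ℕ) → Fin n,
    (-1 : ℝ) ^ (Y : ℕ) *
      pds (List.ofFn mu)
        (dLdq L Φ
          ⟨⟨1 + (Y : ℕ) + (Z : ℕ), by have h1 := Y.isLt; have h2 := Z.isLt; omega⟩, B,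
            Fin.append (Fin.append (fun _ : Fin 1 => lam) mu) nu⟩) x

/-!
The `ε`-derivative of the action is the integral of `∑ ∂L/∂q^X · ∂^X δΦ`. Transferring derivatives
from `δΦ` to the momenta `P = ∂L/∂q` one at a time passes from the mixed sum
`A Y Z = ∑ ∂_μ P^{μν} · ∂_ν δΦ` (with `|μ| = Y`, `|ν| = Z`) to `-A (Y + 1) (Z - 1)`, up to the
divergence of a current; this uses that `P` is symmetric in its indices. The signed sum of these
steps telescopes along each total order `Y + Z`, from `A 0 X` to `(-1)^X A X 0`, so the integrand is
`∑ E_B δΦ_B` plus a divergence, and the divergence theorem turns the latter into the boundary term.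
-/

open MeasureTheory Set
open scoped ContDiff

section Sums

lemma sum_range_sum_range_sub_telescope {M : Type*} [AddCommGroup M] (a : ℕ → ℕ → M) (N : ℕ) :
    ∑ Z ∈ Finset.range N, ∑ Y ∈ Finset.range (N - Z), (a Y (Z + 1) - a (Y + 1) Z)
      = ∑ X ∈ Finset.range (N + 1), a 0 X - ∑ X ∈ Finset.range (N + 1), a X 0 := by
  have diagonal (s : ℕ) : ∑ Z ∈ Finset.range (s + 1), (a (s - Z) (Z + 1) - a (s - Z + 1) Z)
      = a 0 (s + 1) - a (s + 1) 0 := by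
    rw [← Finset.Nat.sum_antidiagonal_eq_sum_range_succ (fun Z Y ↦ a Y (Z + 1) - a (Y + 1) Z),
      Finset.sum_sub_distrib, sub_eq_sub_iff_add_eq_add, add_comm, add_comm (a 0 _)]
    exact (Finset.Nat.sum_antidiagonal_succ (f := fun p ↦ a p.2 p.1)).symm.trans
      (Finset.Nat.sum_antidiagonal_succ' (f := fun p ↦ a p.2 p.1)) |>.trans (add_comm _ _)
  rw [← Finset.sum_range_diag_flip N fun Z Y ↦ a Y (Z + 1) - a (Y + 1) Z,
    Finset.sum_congr rfl fun s _ ↦ diagonal s, Finset.sum_sub_distrib,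
    Finset.sum_range_succ' (a 0), Finset.sum_range_succ' (a · 0), add_sub_add_right_eq_sub]

/-- The sum of `g` over all multi-indices of length `k`, a multi-index being the list of its
coordinate directions. Lists make the concatenation of multi-indices free of casts. -/
def multiIndexSum {n : ℕ} {M : Type*} [AddCommMonoid M] (k : ℕ) (g : List (Fin n) → M) : M :=
  ∑ v : Fin k → Fin n, g (List.ofFn v)

variable {n : ℕ} {M : Type*} [AddCommMonoid M]

lemma multiIndexSum_succ (k : ℕ) (g : List (Fin n) → M) :
    multiIndexSum (k + 1) g = ∑ i, multiIndexSum k fun l ↦ g (i :: l) := by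
  unfold multiIndexSum
  rw [← (Fin.consEquiv fun _ ↦ Fin n).sum_comp, Fintype.sum_prod_type]
  simp [Fin.consEquiv]

lemma multiIndexSum_add (k : ℕ) (g h : List (Fin n) → M) :
    multiIndexSum k (fun l ↦ g l + h l) = multiIndexSum k g + multiIndexSum k h :=
  Finset.sum_add_distrib

lemma multiIndexSum_sum {ι : Type*} (s : Finset ι) (k : ℕ) (g : ι → List (Fin n) → M) :
    multiIndexSum k (fun l ↦ ∑ i ∈ s, g i l) = ∑ i ∈ s, multiIndexSum k (g i) :=
  Finset.sum_comm

end Sums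

section PartialDerivatives

lemma contDiff_sum {𝕜 E F ι : Type*} [NontriviallyNormedField 𝕜] [NormedAddCommGroup E]
    [NormedSpace 𝕜 E] [NormedAddCommGroup F] [NormedSpace 𝕜 F] {m : ℕ∞ω} (s : Finset ι)
    {H : ι → E → F} (hH : ∀ j ∈ s, ContDiff 𝕜 m (H j)) : ContDiff 𝕜 m (∑ j ∈ s, H j) := by
  simpa only [Finset.sum_fn] using ContDiff.sum hH

variable {n : ℕ} {F G : (Fin n → ℝ) → ℝ}

lemma contDiff_pd {m k : ℕ∞ω} (i : Fin n) (hF : ContDiff ℝ k F) (hmk : m + 1 ≤ k) :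
    ContDiff ℝ m (pd i F) :=
  (hF.fderiv_right hmk).clm_apply contDiff_const

lemma pd_add (i : Fin n) (hF : Differentiable ℝ F) (hG : Differentiable ℝ G) :
    pd i (F + G) = pd i F + pd i G := by
  ext x
  simp [pd, fderiv_add (hF x) (hG x)]

lemma pd_const_smul (i : Fin n) (c : ℝ) (hF : Differentiable ℝ F) :
    pd i (c • F) = c • pd i F := by
  ext x
  simp [pd, fderiv_const_smul (hF x)]

lemma pd_mul (i : Fin n) (hF : Differentiable ℝ F) (hG : Differentiable ℝ G) :
    pd i (F * G) = pd i F * G + F * pd i G := by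
  ext x
  simp only [pd, fderiv_mul (hF x) (hG x), Pi.add_apply, Pi.mul_apply, add_apply, smul_apply,
    smul_eq_mul]
  ring

lemma pd_sum {ι : Type*} (i : Fin n) (s : Finset ι) {H : ι → (Fin n → ℝ) → ℝ}
    (hH : ∀ j ∈ s, Differentiable ℝ (H j)) :
    pd i (∑ j ∈ s, H j) = ∑ j ∈ s, pd i (H j) := by
  ext x
  simp [pd, fderiv_sum fun j hj ↦ hH j hj x]

lemma pd_multiIndexSum (i : Fin n) (k : ℕ) {H : List (Fin n) → (Fin n → ℝ) → ℝ}
    (hH : ∀ l, Differentiable ℝ (H l)) :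
    pd i (multiIndexSum k H) = multiIndexSum k fun l ↦ pd i (H l) :=
  pd_sum i _ fun _ _ ↦ hH _

lemma pd_comm (i j : Fin n) (hF : ContDiff ℝ 2 F) : pd i (pd j F) = pd j (pd i F) := by
  have pd_pd (i j : Fin n) (x : Fin n → ℝ) :
      pd i (pd j F) x = fderiv ℝ (fderiv ℝ F) x (Pi.single i 1) (Pi.single j 1) := by
    have hF' : DifferentiableAt ℝ (fderiv ℝ F) x :=
      (hF.fderiv_right (m := 1) le_rfl).differentiable one_ne_zero x
    change fderiv ℝ (fun y ↦ fderiv ℝ F y (Pi.single j 1)) x _ = _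
    simp [fderiv_clm_apply hF' (differentiableAt_const _)]
  ext x
  rw [pd_pd, pd_pd]
  exact hF.contDiffAt.isSymmSndFDerivAt (by simp) _ _

lemma contDiff_pds (l : List (Fin n)) (hF : ContDiff ℝ ∞ F) : ContDiff ℝ ∞ (pds l F) := by
  induction l with
  | nil => exact hF
  | cons i l ih => exact contDiff_pd i ih (by simp)

lemma differentiable_pds (l : List (Fin n)) (hF : ContDiff ℝ ∞ F) : Differentiable ℝ (pds l F) :=
  (contDiff_pds l hF).differentiable (by simp)

lemma pds_add_smul (l : List (Fin n)) (c : ℝ) (hF : ContDiff ℝ ∞ F) (hG : ContDiff ℝ ∞ G) :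
    pds l (F + c • G) = pds l F + c • pds l G := by
  induction l with
  | nil => rfl
  | cons i l ih =>
    rw [pds, ih, pd_add i (differentiable_pds l hF) ((differentiable_pds l hG).const_smul c),
      pd_const_smul i c (differentiable_pds l hG), pds, pds]

lemma pds_perm {l l' : List (Fin n)} (h : l.Perm l') (hF : ContDiff ℝ ∞ F) :
    pds l F = pds l' F := by
  induction h with
  | nil => rfl
  | cons i _ ih => rw [pds, pds, ih]
  | swap i j l => exact pd_comm _ _ (contDiff_infty.1 (contDiff_pds l hF) 2)
  | trans _ _ ih ih' => exact ih.trans ih'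

end PartialDerivatives

section IntegrationByParts

variable {n : ℕ} {P : List (Fin n) → (Fin n → ℝ) → ℝ} {u : (Fin n → ℝ) → ℝ}

/-- The function `∑ ∂_μ P^{μν} · ∂_ν u` over multi-indices with `|μ| = Y` and `|ν| = Z`: the
intermediate stage, after `Y` steps, of the integration by parts of `∑ P^λ · ∂_λ u` with
`|λ| = Y + Z`. -/
noncomputable def mixedTerm (P : List (Fin n) → (Fin n → ℝ) → ℝ) (u : (Fin n → ℝ) → ℝ)
    (Y Z : ℕ) : (Fin n → ℝ) → ℝ :=
  multiIndexSum Y fun μ ↦ multiIndexSum Z fun ν ↦ pds μ (P (μ ++ ν)) * pds ν u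

/-- The `i`-th component `∑ ∂_μ P^{iμν} · ∂_ν u` (with `|μ| = Y` and `|ν| = Z`) of the current
released by one step of the integration by parts. -/
noncomputable def currentTerm (P : List (Fin n) → (Fin n → ℝ) → ℝ) (u : (Fin n → ℝ) → ℝ)
    (i : Fin n) (Y Z : ℕ) : (Fin n → ℝ) → ℝ :=
  multiIndexSum Y fun μ ↦ multiIndexSum Z fun ν ↦ pds μ (P (i :: (μ ++ ν))) * pds ν u

/-- The `i`-th component of the total current released when all derivatives up to order `N` are
moved from `u` to `P`. -/
noncomputable def current (N : ℕ) (P : List (Fin n) → (Fin n → ℝ) → ℝ) (u : (Fin n → ℝ) → ℝ)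
    (i : Fin n) : (Fin n → ℝ) → ℝ :=
  ∑ Z ∈ Finset.range N, ∑ Y ∈ Finset.range (N - Z), (-1 : ℝ) ^ Y • currentTerm P u i Y Z

lemma contDiff_currentTerm (hP : ∀ l, ContDiff ℝ ∞ (P l)) (hu : ContDiff ℝ ∞ u) (i : Fin n)
    (Y Z : ℕ) : ContDiff ℝ ∞ (currentTerm P u i Y Z) :=
  contDiff_sum _ fun _ _ ↦ contDiff_sum _ fun _ _ ↦
    (contDiff_pds _ (hP _)).mul (contDiff_pds _ hu)

lemma contDiff_current (N : ℕ) (hP : ∀ l, ContDiff ℝ ∞ (P l)) (hu : ContDiff ℝ ∞ u)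
    (i : Fin n) : ContDiff ℝ ∞ (current N P u i) :=
  contDiff_sum _ fun _ _ ↦ contDiff_sum _ fun _ _ ↦
    contDiff_const.smul (contDiff_currentTerm hP hu i _ _)

lemma pd_currentTerm (hP : ∀ l, ContDiff ℝ ∞ (P l)) (hu : ContDiff ℝ ∞ u) (i : Fin n)
    (Y Z : ℕ) :
    pd i (currentTerm P u i Y Z)
      = (multiIndexSum Y fun μ ↦ multiIndexSum Z fun ν ↦
          pds (i :: μ) (P (i :: (μ ++ ν))) * pds ν u)
        + multiIndexSum Y fun μ ↦ multiIndexSum Z fun ν ↦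
          pds μ (P (i :: (μ ++ ν))) * pds (i :: ν) u := by
  have hsummand (μ ν : List (Fin n)) :
      Differentiable ℝ (pds μ (P (i :: (μ ++ ν))) * pds ν u) :=
    (differentiable_pds μ (hP _)).mul (differentiable_pds ν hu)
  have hinner (μ : List (Fin n)) :
      Differentiable ℝ (multiIndexSum Z fun ν ↦ pds μ (P (i :: (μ ++ ν))) * pds ν u) :=
    .sum fun _ _ ↦ hsummand _ _
  simp only [currentTerm, pd_multiIndexSum i Y hinner, pd_multiIndexSum i Z (hsummand _),
    pd_mul i (differentiable_pds _ (hP _)) (differentiable_pds _ hu), multiIndexSum_add, pds]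

lemma sum_pd_currentTerm (hP : ∀ l, ContDiff ℝ ∞ (P l))
    (hPperm : ∀ ⦃l l'⦄, l.Perm l' → P l = P l') (hu : ContDiff ℝ ∞ u) (Y Z : ℕ) :
    ∑ i, pd i (currentTerm P u i Y Z) = mixedTerm P u (Y + 1) Z + mixedTerm P u Y (Z + 1) := by
  have hmove (i : Fin n) (μ ν : List (Fin n)) : P (i :: (μ ++ ν)) = P (μ ++ i :: ν) :=
    hPperm List.perm_middle.symm
  simp_rw [pd_currentTerm hP hu, Finset.sum_add_distrib, mixedTerm, multiIndexSum_succ,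
    multiIndexSum_sum, ← hmove, List.cons_append]

lemma sum_pd_current (N : ℕ) (hP : ∀ l, ContDiff ℝ ∞ (P l))
    (hPperm : ∀ ⦃l l'⦄, l.Perm l' → P l = P l') (hu : ContDiff ℝ ∞ u) :
    ∑ i, pd i (current N P u i)
      = ∑ X ∈ Finset.range (N + 1), mixedTerm P u 0 X
        - ∑ X ∈ Finset.range (N + 1), (-1 : ℝ) ^ X • mixedTerm P u X 0 := by
  have hterm (i : Fin n) (Y Z : ℕ) : Differentiable ℝ (currentTerm P u i Y Z) :=
    (contDiff_currentTerm hP hu i Y Z).differentiable (by simp)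
  have hpd (i : Fin n) : pd i (current N P u i)
      = ∑ Z ∈ Finset.range N, ∑ Y ∈ Finset.range (N - Z),
          (-1 : ℝ) ^ Y • pd i (currentTerm P u i Y Z) := by
    rw [current, pd_sum i _ fun Z _ ↦ .sum fun Y _ ↦ (hterm i Y Z).const_smul _]
    refine Finset.sum_congr rfl fun Z _ ↦ ?_
    rw [pd_sum i _ fun Y _ ↦ (hterm i Y Z).const_smul _]
    exact Finset.sum_congr rfl fun Y _ ↦ pd_const_smul i _ (hterm i Y Z)
  have htelescope :=
    sum_range_sum_range_sub_telescope (fun Y Z ↦ (-1 : ℝ) ^ Y • mixedTerm P u Y Z) N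
  simp only [pow_zero, one_smul] at htelescope
  rw [← htelescope, Finset.sum_congr rfl fun i _ ↦ hpd i, Finset.sum_comm]
  refine Finset.sum_congr rfl fun Z _ ↦ ?_
  rw [Finset.sum_comm]
  refine Finset.sum_congr rfl fun Y _ ↦ ?_
  rw [← Finset.smul_sum, sum_pd_currentTerm hP hPperm hu, pow_succ]
  module

end IntegrationByParts

section JetSymmetry

variable {n f N : ℕ}

/-- Invariance of `L` under permutations of the indices of each jet variable, which encodes that
`L` is a function of symmetric jet variables `q^X_{B,λ₁…λ_X}`. -/
def JetSymmetric (L : (Fin n → ℝ) → Jet n f N → ℝ) : Prop :=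
  ∀ (x : Fin n → ℝ) (q : Jet n f N) (X : Fin (N + 1)) (σ : Equiv.Perm (Fin (X : ℕ))),
    L x (permJet X σ q) = L x q

/-- The permutation of the jet variables underlying `permJet`: it replaces the multi-index `v` of
an order-`X` variable by `v ∘ σ`. -/
def permJIdx (X : Fin (N + 1)) (σ : Equiv.Perm (Fin (X : ℕ))) : Equiv.Perm (JIdx n f N) :=
  Equiv.sigmaCongrRight fun Y ↦
    if h : Y = X then
      .prodCongr (.refl _) (.arrowCongr (h ▸ σ.symm) (.refl _))
    else .refl _

lemma permJIdx_self (X : Fin (N + 1)) (σ : Equiv.Perm (Fin (X : ℕ))) (B : Fin f)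
    (v : Fin (X : ℕ) → Fin n) : permJIdx X σ ⟨X, B, v⟩ = ⟨X, B, v ∘ σ⟩ := by
  simp [permJIdx, Equiv.arrowCongr]

lemma permJet_eq_comp_permJIdx (X : Fin (N + 1)) (σ : Equiv.Perm (Fin (X : ℕ)))
    (q : Jet n f N) : permJet X σ q = q ∘ permJIdx X σ := by
  ext ⟨Y, B, v⟩
  by_cases h : Y = X
  · subst h
    rw [Function.comp_apply, permJIdx_self]
    simp [permJet, Function.comp_def]
  · simp [permJet, permJIdx, h]

lemma permJet_jet {Φ : Fin f → (Fin n → ℝ) → ℝ} (hΦ : ∀ B, ContDiff ℝ ∞ (Φ B)) (X : Fin (N + 1))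
    (σ : Equiv.Perm (Fin (X : ℕ))) (x : Fin n → ℝ) :
    permJet X σ (jet Φ x : Jet n f N) = jet Φ x := by
  ext ⟨Y, B, v⟩
  by_cases h : Y = X
  · subst h
    rw [permJet_eq_comp_permJIdx, Function.comp_apply, permJIdx_self]
    exact congrFun (pds_perm (σ.ofFn_comp_perm v) (hΦ B)) x
  · simp [permJet, h]

lemma dLdq_comp_perm {L : (Fin n → ℝ) → Jet n f N → ℝ} (hL : JetSymmetric L)
    {Φ : Fin f → (Fin n → ℝ) → ℝ} (hΦ : ∀ B, ContDiff ℝ ∞ (Φ B)) (X : Fin (N + 1))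
    (σ : Equiv.Perm (Fin (X : ℕ))) (B : Fin f) (v : Fin (X : ℕ) → Fin n) :
    dLdq L Φ ⟨X, B, v ∘ σ⟩ = dLdq L Φ ⟨X, B, v⟩ := by
  let τ : Jet n f N ≃L[ℝ] Jet n f N :=
    (LinearEquiv.funCongrLeft ℝ ℝ (permJIdx X σ)).toContinuousLinearEquiv
  have hτ (q : Jet n f N) : τ q = permJet X σ q := (permJet_eq_comp_permJIdx X σ q).symm
  ext x
  have hLτ : L x ∘ τ = L x := funext fun q ↦ by rw [Function.comp_apply, hτ, hL]
  have hsingle : τ (Pi.single ⟨X, B, v ∘ σ⟩ 1) = Pi.single ⟨X, B, v⟩ 1 := by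
    rw [← permJIdx_self]
    exact (Pi.single_comp_equiv (permJIdx X σ) _ (1 : ℝ)).trans (by rw [Equiv.symm_apply_apply])
  calc dLdq L Φ ⟨X, B, v ∘ σ⟩ x
      = fderiv ℝ (L x ∘ τ) (jet Φ x) (Pi.single ⟨X, B, v ∘ σ⟩ 1) := by rw [hLτ, dLdq]
    _ = fderiv ℝ (L x) (τ (jet Φ x)) (τ (Pi.single ⟨X, B, v ∘ σ⟩ 1)) := by
      rw [τ.comp_right_fderiv]; rfl
    _ = dLdq L Φ ⟨X, B, v⟩ x := by rw [hτ, permJet_jet hΦ, hsingle, dLdq]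

lemma exists_comp_perm_eq_of_ofFn_perm {α : Type*} {k : ℕ} {v w : Fin k → α}
    (h : (List.ofFn v).Perm (List.ofFn w)) : ∃ σ : Equiv.Perm (Fin k), v ∘ σ = w := by
  obtain ⟨_, _⟩ := exists_wellFoundedLT α
  have hperm : (List.ofFn (v ∘ Tuple.sort v)).Perm (List.ofFn (w ∘ Tuple.sort w)) :=
    ((Tuple.sort v).ofFn_comp_perm v).trans (h.trans ((Tuple.sort w).ofFn_comp_perm w).symm)
  have hsort : v ∘ Tuple.sort v = w ∘ Tuple.sort w :=
    List.ofFn_injective <| hperm.eq_of_pairwise'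
      (Tuple.monotone_sort v).sortedLE_ofFn.pairwise (Tuple.monotone_sort w).sortedLE_ofFn.pairwise
  refine ⟨(Tuple.sort w).symm.trans (Tuple.sort v), ?_⟩
  rw [Equiv.coe_trans, ← Function.comp_assoc, hsort, Function.comp_assoc, Equiv.self_comp_symm,
    Function.comp_id]

end JetSymmetry

section Momenta

variable {n f N : ℕ} {L : (Fin n → ℝ) → Jet n f N → ℝ} {Φ δΦ : Fin f → (Fin n → ℝ) → ℝ}

/-- The momentum `∂L/∂q^X_{B,λ}` along the jet of `Φ`, with `X` and `λ` read off from the list `l`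
of coordinate directions; it is `0` if `l` is longer than the order `N` of `L`. -/
noncomputable def momentum (L : (Fin n → ℝ) → Jet n f N → ℝ) (Φ : Fin f → (Fin n → ℝ) → ℝ)
    (B : Fin f) (l : List (Fin n)) : (Fin n → ℝ) → ℝ :=
  if h : l.length < N + 1 then dLdq L Φ ⟨⟨l.length, h⟩, B, l.get⟩ else 0

lemma momentum_ofFn (B : Fin f) (X : Fin (N + 1)) (v : Fin (X : ℕ) → Fin n) :
    momentum L Φ B (List.ofFn v) = dLdq L Φ ⟨X, B, v⟩ := by
  -- The dependent pair `p` absorbs the cast along `(List.ofFn v).length = X`.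
  have of_eq {p : Σ k, Fin k → Fin n} (hp : p = ⟨X, v⟩) :
      (if h : p.1 < N + 1 then dLdq L Φ ⟨⟨p.1, h⟩, B, p.2⟩ else 0) = dLdq L Φ ⟨X, B, v⟩ := by
    subst hp
    exact dif_pos X.isLt
  exact of_eq (List.equivSigmaTuple.apply_symm_apply ⟨X, v⟩)

lemma momentum_perm (hL : JetSymmetric L) (hΦ : ∀ B, ContDiff ℝ ∞ (Φ B)) (B : Fin f)
    ⦃l l' : List (Fin n)⦄ (h : l.Perm l') : momentum L Φ B l = momentum L Φ B l' := by
  obtain ⟨⟨k, v⟩, rfl⟩ := List.equivSigmaTuple.symm.surjective l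
  obtain ⟨⟨k', w⟩, rfl⟩ := List.equivSigmaTuple.symm.surjective l'
  obtain rfl : k = k' := by simpa [List.equivSigmaTuple] using h.length_eq
  obtain ⟨σ, rfl⟩ := exists_comp_perm_eq_of_ofFn_perm h
  change momentum L Φ B (List.ofFn v) = momentum L Φ B (List.ofFn (v ∘ σ))
  by_cases hk : k < N + 1
  · exact (momentum_ofFn B ⟨k, hk⟩ v).trans
      ((dLdq_comp_perm hL hΦ ⟨k, hk⟩ σ B v).symm.trans (momentum_ofFn B ⟨k, hk⟩ (v ∘ σ)).symm)
  · simp [momentum, hk]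

lemma contDiff_jet (hΦ : ∀ B, ContDiff ℝ ∞ (Φ B)) :
    ContDiff ℝ ∞ (jet Φ : (Fin n → ℝ) → Jet n f N) :=
  contDiff_pi.2 fun _ ↦ contDiff_pds _ (hΦ _)

lemma contDiff_dLdq (hL : ContDiff ℝ ∞ fun p : (Fin n → ℝ) × Jet n f N ↦ L p.1 p.2)
    (hΦ : ∀ B, ContDiff ℝ ∞ (Φ B)) (idx : JIdx n f N) : ContDiff ℝ ∞ (dLdq L Φ idx) :=
  ContDiff.fderiv_apply (f := L) hL (contDiff_jet hΦ) contDiff_const (by simp)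

lemma contDiff_momentum (hL : ContDiff ℝ ∞ fun p : (Fin n → ℝ) × Jet n f N ↦ L p.1 p.2)
    (hΦ : ∀ B, ContDiff ℝ ∞ (Φ B)) (B : Fin f) (l : List (Fin n)) :
    ContDiff ℝ ∞ (momentum L Φ B l) := by
  unfold momentum
  split_ifs
  exacts [contDiff_dLdq hL hΦ _, contDiff_const]

lemma contDiff_eulerLagrange (hL : ContDiff ℝ ∞ fun p : (Fin n → ℝ) × Jet n f N ↦ L p.1 p.2)
    (hΦ : ∀ B, ContDiff ℝ ∞ (Φ B)) (B : Fin f) : ContDiff ℝ ∞ (EulerLagrange L Φ B) :=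
  .sum fun _ _ ↦ .sum fun _ _ ↦ contDiff_const.mul (contDiff_pds _ (contDiff_dLdq hL hΦ _))

lemma jet_add_smul (hΦ : ∀ B, ContDiff ℝ ∞ (Φ B)) (hδΦ : ∀ B, ContDiff ℝ ∞ (δΦ B)) (ε : ℝ)
    (x : Fin n → ℝ) : (jet (Φ + ε • δΦ) x : Jet n f N) = jet Φ x + ε • jet δΦ x :=
  funext fun _ ↦ congrFun (pds_add_smul _ ε (hΦ _) (hδΦ _)) x

end Momenta

section FirstVariation

variable {n f N : ℕ} {L : (Fin n → ℝ) → Jet n f N → ℝ} {Φ δΦ : Fin f → (Fin n → ℝ) → ℝ}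

lemma fderiv_jet_eq_sum_mixedTerm (x : Fin n → ℝ) :
    fderiv ℝ (L x) (jet Φ x) (jet δΦ x)
      = ∑ B, ∑ X ∈ Finset.range (N + 1), mixedTerm (momentum L Φ B) (δΦ B) 0 X x := by
  calc fderiv ℝ (L x) (jet Φ x) (jet δΦ x)
      = ∑ idx : JIdx n f N, dLdq L Φ idx x * jet δΦ x idx := by
        conv_lhs => rw [pi_eq_sum_univ' (jet δΦ x)]
        simp [dLdq, mul_comm]
    _ = ∑ X : Fin (N + 1), ∑ B, mixedTerm (momentum L Φ B) (δΦ B) 0 X x := by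
        rw [Fintype.sum_sigma]
        refine Finset.sum_congr rfl fun X _ ↦ ?_
        rw [Fintype.sum_prod_type]
        refine Finset.sum_congr rfl fun B _ ↦ ?_
        simp [mixedTerm, multiIndexSum, momentum_ofFn, jet, pds]
    _ = ∑ B, ∑ X ∈ Finset.range (N + 1), mixedTerm (momentum L Φ B) (δΦ B) 0 X x := by
        rw [Finset.sum_comm]
        simp only [← Fin.sum_univ_eq_sum_range]

lemma sum_mixedTerm_momentum_zero_right (B : Fin f) (u : (Fin n → ℝ) → ℝ) :
    ∑ X ∈ Finset.range (N + 1), (-1 : ℝ) ^ X • mixedTerm (momentum L Φ B) u X 0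
      = EulerLagrange L Φ B * u := by
  ext x
  rw [← Fin.sum_univ_eq_sum_range (fun X ↦ (-1 : ℝ) ^ X • mixedTerm (momentum L Φ B) u X 0)]
  simp [mixedTerm, multiIndexSum, momentum_ofFn, EulerLagrange, pds, Finset.sum_mul,
    Finset.mul_sum, mul_assoc]

lemma kcur_eq_sum_momentum (B : Fin f) (i : Fin n) (Z : Fin N) (ν : Fin (Z : ℕ) → Fin n)
    (x : Fin n → ℝ) :
    Kcur L Φ B i Z ν x = ∑ Y ∈ Finset.range (N - Z), (-1 : ℝ) ^ Y *
      multiIndexSum Y fun μ ↦ pds μ (momentum L Φ B (i :: (μ ++ List.ofFn ν))) x := by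
  have ofFn_append {Y : ℕ} (μ : Fin Y → Fin n) :
      List.ofFn (Fin.append (Fin.append (fun _ : Fin 1 ↦ i) μ) ν)
        = i :: (List.ofFn μ ++ List.ofFn ν) := by
    simp [List.ofFn_fin_append]
  simp_rw [← Fin.sum_univ_eq_sum_range (fun Y ↦ (-1 : ℝ) ^ Y *
      multiIndexSum Y fun μ ↦ pds μ (momentum L Φ B (i :: (μ ++ List.ofFn ν))) x),
    Kcur, multiIndexSum, Finset.mul_sum, ← ofFn_append]
  refine Finset.sum_congr rfl fun Y _ ↦ Finset.sum_congr rfl fun μ _ ↦ ?_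
  rw [← momentum_ofFn]

/-- The `i`-th component `∑ ∂_ν δΦ_B · K^{Biν}` of the vector field whose flux through the boundary
is the first variation of the action. -/
noncomputable def boundaryCurrent (L : (Fin n → ℝ) → Jet n f N → ℝ)
    (Φ δΦ : Fin f → (Fin n → ℝ) → ℝ) (i : Fin n) (x : Fin n → ℝ) : ℝ :=
  ∑ B : Fin f, ∑ Z : Fin N, ∑ ν : Fin (Z : ℕ) → Fin n,
    pds (List.ofFn ν) (δΦ B) x * Kcur L Φ B i Z ν x

lemma boundaryCurrent_eq_sum_current (i : Fin n) :
    boundaryCurrent L Φ δΦ i = ∑ B, current N (momentum L Φ B) (δΦ B) i := by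
  ext x
  rw [Finset.sum_apply]
  refine Finset.sum_congr rfl fun B _ ↦ ?_
  rw [current, ← Fin.sum_univ_eq_sum_range (fun Z ↦ ∑ Y ∈ Finset.range (N - Z),
    (-1 : ℝ) ^ Y • currentTerm (momentum L Φ B) (δΦ B) i Y Z), Finset.sum_apply]
  refine Finset.sum_congr rfl fun Z _ ↦ ?_
  simp only [kcur_eq_sum_momentum, Finset.mul_sum, Finset.sum_apply, Pi.smul_apply, smul_eq_mul,
    currentTerm, multiIndexSum, Pi.mul_apply]
  rw [Finset.sum_comm]
  refine Finset.sum_congr rfl fun Y _ ↦ ?_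
  rw [Finset.sum_comm]
  exact Finset.sum_congr rfl fun μ _ ↦ Finset.sum_congr rfl fun ν _ ↦ by ring

lemma contDiff_boundaryCurrent (hL : ContDiff ℝ ∞ fun p : (Fin n → ℝ) × Jet n f N ↦ L p.1 p.2)
    (hΦ : ∀ B, ContDiff ℝ ∞ (Φ B)) (hδΦ : ∀ B, ContDiff ℝ ∞ (δΦ B)) (i : Fin n) :
    ContDiff ℝ ∞ (boundaryCurrent L Φ δΦ i) := by
  rw [boundaryCurrent_eq_sum_current]
  exact contDiff_sum _ fun B _ ↦ contDiff_current N (contDiff_momentum hL hΦ B) (hδΦ B) i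

lemma fderiv_jet_eq_eulerLagrange_add_divergence
    (hL : ContDiff ℝ ∞ fun p : (Fin n → ℝ) × Jet n f N ↦ L p.1 p.2) (hLsymm : JetSymmetric L)
    (hΦ : ∀ B, ContDiff ℝ ∞ (Φ B)) (hδΦ : ∀ B, ContDiff ℝ ∞ (δΦ B)) (x : Fin n → ℝ) :
    fderiv ℝ (L x) (jet Φ x) (jet δΦ x)
      = ∑ B, EulerLagrange L Φ B x * δΦ B x + ∑ i, pd i (boundaryCurrent L Φ δΦ i) x := by
  have hP (B : Fin f) := contDiff_momentum hL hΦ B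
  have hparts (B : Fin f) : ∑ i, pd i (current N (momentum L Φ B) (δΦ B) i)
      = ∑ X ∈ Finset.range (N + 1), mixedTerm (momentum L Φ B) (δΦ B) 0 X
        - EulerLagrange L Φ B * δΦ B := by
    rw [sum_pd_current N (hP B) (momentum_perm hLsymm hΦ B) (hδΦ B),
      sum_mixedTerm_momentum_zero_right]
  have hpd (i : Fin n) : pd i (boundaryCurrent L Φ δΦ i)
      = ∑ B, pd i (current N (momentum L Φ B) (δΦ B) i) := by
    rw [boundaryCurrent_eq_sum_current, pd_sum i _ fun B _ ↦
      (contDiff_current N (hP B) (hδΦ B) i).differentiable (by simp)]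
  have hdiv : ∑ i, pd i (boundaryCurrent L Φ δΦ i)
      = ∑ B, ∑ X ∈ Finset.range (N + 1), mixedTerm (momentum L Φ B) (δΦ B) 0 X
        - ∑ B, EulerLagrange L Φ B * δΦ B := by
    rw [Finset.sum_congr rfl fun i _ ↦ hpd i, Finset.sum_comm, Finset.sum_congr rfl fun B _ ↦
      hparts B, Finset.sum_sub_distrib]
  have hdiv_apply := congrFun hdiv x
  simp only [Finset.sum_apply, Pi.sub_apply, Pi.mul_apply] at hdiv_apply
  rw [hdiv_apply, fderiv_jet_eq_sum_mixedTerm, add_sub_cancel]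

end FirstVariation

section Integrals

lemma hasDerivAt_setIntegral_of_isCompact {X E : Type*} [TopologicalSpace X] [MeasurableSpace X]
    [OpensMeasurableSpace X] [NormedAddCommGroup E] [NormedSpace ℝ E]
    {μ : Measure X} [IsFiniteMeasureOnCompacts μ] {K : Set X} (hK : IsCompact K)
    (hKm : MeasurableSet K) {F F' : ℝ → X → E} (hF : ∀ t, ContinuousOn (F t) K)
    (hF' : ContinuousOn (Function.uncurry F') (univ ×ˢ K))
    (hderiv : ∀ t, ∀ x ∈ K, HasDerivAt (F · x) (F' t x) t) (t₀ : ℝ) :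
    HasDerivAt (fun t ↦ ∫ x in K, F t x ∂μ) (∫ x in K, F' t₀ x ∂μ) t₀ := by
  obtain ⟨C, hC⟩ := ((isCompact_closedBall t₀ 1).prod hK).exists_bound_of_continuousOn
    (hF'.mono (prod_mono_left (subset_univ _)))
  have hF't₀ : ContinuousOn (F' t₀) K :=
    hF'.comp (Continuous.prodMk_right t₀).continuousOn fun _ hx ↦ ⟨mem_univ _, hx⟩
  exact (hasDerivAt_integral_of_dominated_loc_of_deriv_le (bound := fun _ ↦ C)
    (Metric.closedBall_mem_nhds t₀ one_pos)
    (.of_forall fun t ↦ (hF t).aestronglyMeasurable_of_isCompact hK hKm)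
    ((hF t₀).integrableOn_compact' hK hKm)
    (hF't₀.aestronglyMeasurable_of_isCompact hK hKm)
    (ae_restrict_of_forall_mem hKm fun x hx t ht ↦ hC (t, x) ⟨ht, hx⟩)
    (integrableOn_const hK.measure_lt_top.ne)
    (ae_restrict_of_forall_mem hKm fun x hx t _ ↦ hderiv t x hx)).2

lemma integral_sum_pd_eq_sum_integral_face {d : ℕ} {a b : Fin (d + 1) → ℝ} (hab : a ≤ b)
    {V : Fin (d + 1) → (Fin (d + 1) → ℝ) → ℝ} (hV : ∀ i, ContDiff ℝ 1 (V i)) :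
    ∫ x in Icc a b, ∑ i, pd i (V i) x
      = ∑ i : Fin (d + 1),
        ((∫ x' in Icc (a ∘ i.succAbove) (b ∘ i.succAbove), V i (i.insertNth (b i) x'))
          - ∫ x' in Icc (a ∘ i.succAbove) (b ∘ i.succAbove), V i (i.insertNth (a i) x')) :=
  integral_divergence_of_hasFDerivAt_off_countable' a b hab V (fun i ↦ fderiv ℝ (V i)) ∅
    countable_empty (fun i ↦ (hV i).continuous.continuousOn)
    (fun x _ i ↦ ((hV i).differentiable one_ne_zero x).hasFDerivAt)
    ((continuous_finsetSum _ fun i _ ↦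
      (contDiff_pd (m := 0) i (hV i) (by simp)).continuous).continuousOn.integrableOn_compact
        isCompact_Icc)

lemma hasDerivAt_setIntegral_jet {n f N : ℕ} {L : (Fin n → ℝ) → Jet n f N → ℝ}
    {Φ δΦ : Fin f → (Fin n → ℝ) → ℝ}
    (hL : ContDiff ℝ ∞ fun p : (Fin n → ℝ) × Jet n f N ↦ L p.1 p.2)
    (hΦ : ∀ B, ContDiff ℝ ∞ (Φ B)) (hδΦ : ∀ B, ContDiff ℝ ∞ (δΦ B)) {K : Set (Fin n → ℝ)}
    (hK : IsCompact K) :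
    HasDerivAt (fun ε : ℝ ↦ ∫ x in K, L x (jet (Φ + ε • δΦ) x))
      (∫ x in K, fderiv ℝ (L x) (jet Φ x) (jet δΦ x)) 0 := by
  have hjΦ : ContDiff ℝ ∞ (jet Φ : (Fin n → ℝ) → Jet n f N) := contDiff_jet hΦ
  have hjδΦ : ContDiff ℝ ∞ (jet δΦ : (Fin n → ℝ) → Jet n f N) := contDiff_jet hδΦ
  have hLx (x : Fin n → ℝ) : Differentiable ℝ (L x) :=
    (hL.comp (contDiff_prodMk_right x)).differentiable (by simp)
  have hcurve (ε : ℝ) (x : Fin n → ℝ) :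
      HasDerivAt (fun t : ℝ ↦ (jet Φ x + t • jet δΦ x : Jet n f N)) (jet δΦ x) ε := by
    simpa using ((hasDerivAt_id ε).smul_const (jet δΦ x : Jet n f N)).const_add (jet Φ x)
  have hintegrand (ε : ℝ) : Continuous fun x ↦ L x (jet Φ x + ε • jet δΦ x) :=
    (hL.comp (contDiff_id.prodMk (hjΦ.add (hjδΦ.const_smul ε)))).continuous
  have hvariation : ContDiff ℝ ∞ fun p : ℝ × (Fin n → ℝ) ↦
      fderiv ℝ (L p.2) (jet Φ p.2 + p.1 • jet δΦ p.2) (jet δΦ p.2) :=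
    ContDiff.fderiv_apply (f := fun p : ℝ × (Fin n → ℝ) ↦ L p.2) (m := ∞)
      (hL.comp ((contDiff_snd.comp contDiff_fst).prodMk contDiff_snd))
      ((hjΦ.comp contDiff_snd).add (contDiff_fst.smul (hjδΦ.comp contDiff_snd)))
      (hjδΦ.comp contDiff_snd) (by simp)
  simp_rw [jet_add_smul hΦ hδΦ]
  simpa using hasDerivAt_setIntegral_of_isCompact hK hK.measurableSet
    (F' := fun ε x ↦ fderiv ℝ (L x) (jet Φ x + ε • jet δΦ x) (jet δΦ x))
    (fun ε ↦ (hintegrand ε).continuousOn) hvariation.continuous.continuousOn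
    (fun ε x _ ↦ (hLx x _).hasFDerivAt.comp_hasDerivAt ε (hcurve ε x)) 0

end Integrals

theorem first_variation_of_solution_is_boundary_term_general {d f N : ℕ}
    {L : (Fin (d + 1) → ℝ) → Jet (d + 1) f N → ℝ}
    (hL : ContDiff ℝ ∞ fun p : (Fin (d + 1) → ℝ) × Jet (d + 1) f N ↦ L p.1 p.2)
    (hLsymm : JetSymmetric L) {Φ δΦ : Fin f → (Fin (d + 1) → ℝ) → ℝ}
    (hΦ : ∀ B, ContDiff ℝ ∞ (Φ B)) (hδΦ : ∀ B, ContDiff ℝ ∞ (δΦ B))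
    {a b : Fin (d + 1) → ℝ} (hab : a ≤ b) :
    HasDerivAt (fun ε : ℝ ↦ ∫ x in Icc a b, L x (jet (Φ + ε • δΦ) x))
      ((∫ x in Icc a b, ∑ B, EulerLagrange L Φ B x * δΦ B x)
        + ∑ i : Fin (d + 1),
          ((∫ x' in Icc (a ∘ i.succAbove) (b ∘ i.succAbove),
              boundaryCurrent L Φ δΦ i (i.insertNth (b i) x'))
            - ∫ x' in Icc (a ∘ i.succAbove) (b ∘ i.succAbove),
              boundaryCurrent L Φ δΦ i (i.insertNth (a i) x'))) 0 := by
  have hJ (i : Fin (d + 1)) := contDiff_boundaryCurrent hL hΦ hδΦ i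
  have hEL : Continuous fun x ↦ ∑ B, EulerLagrange L Φ B x * δΦ B x :=
    continuous_finsetSum _ fun B _ ↦
      (contDiff_eulerLagrange hL hΦ B).continuous.mul (hδΦ B).continuous
  have hdiv : Continuous fun x ↦ ∑ i, pd i (boundaryCurrent L Φ δΦ i) x :=
    continuous_finsetSum _ fun i _ ↦ (contDiff_pd (m := 0) i (hJ i) (by simp)).continuous
  have hfirst := hasDerivAt_setIntegral_jet hL hΦ hδΦ (isCompact_Icc (a := a) (b := b))
  simp_rw [fderiv_jet_eq_eulerLagrange_add_divergence hL hLsymm hΦ hδΦ] at hfirst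
  rwa [integral_add (hEL.continuousOn.integrableOn_compact isCompact_Icc)
      (hdiv.continuousOn.integrableOn_compact isCompact_Icc),
    integral_sum_pd_eq_sum_integral_face hab fun i ↦ contDiff_infty.1 (hJ i) 1] at hfirst

/-- equation (10) of the paper: if `Φ` satisfies the Euler–Lagrange
equations on the closed axis-aligned box `Ω = Icc a b ⊂ ℝⁿ` (`n = d+1 ≥ 2`), then the
first variation of the action along any smooth variation `δΦ` (with no boundary
condition imposed) reduces to the boundary term, written as the sum of the outward
fluxes through the `2(d+1)` faces of the box. -/
theorem first_variation_of_solution_is_boundary_term {d f N : ℕ}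
    (hd : 1 ≤ d) (hf : 1 ≤ f) (hN : 1 ≤ N)
    (L : (Fin (d + 1) → ℝ) → Jet (d + 1) f N → ℝ)
    (hL : ContDiff ℝ (⊤ : ℕ∞) (fun p : (Fin (d + 1) → ℝ) × Jet (d + 1) f N => L p.1 p.2))
    (hLsymm : ∀ (x : Fin (d + 1) → ℝ) (q : Jet (d + 1) f N) (X : Fin (N + 1))
      (σ : Equiv.Perm (Fin (X : ℕ))), L x (permJet X σ q) = L x q)
    (Φ δΦ : Fin f → (Fin (d + 1) → ℝ) → ℝ)
    (hΦ : ∀ B, ContDiff ℝ (⊤ : ℕ∞) (Φ B)) (hδΦ : ∀ B, ContDiff ℝ (⊤ : ℕ∞) (δΦ B))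
    (a b : Fin (d + 1) → ℝ) (hab : a ≤ b)
    (hEL : ∀ (B : Fin f), ∀ x ∈ Set.Icc a b, EulerLagrange L Φ B x = 0) :
    deriv (fun ε : ℝ =>
        ∫ x in Set.Icc a b, L x (jet (fun B x' => Φ B x' + ε * δΦ B x') x)) 0
      = ∑ i : Fin (d + 1),
          ((∫ x' in Set.Icc (a ∘ i.succAbove) (b ∘ i.succAbove),
              ∑ B : Fin f, ∑ Z : Fin N, ∑ nu : Fin (Z : ℕ) → Fin (d + 1),
                pds (List.ofFn nu) (δΦ B) (i.insertNth (b i) x')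
                  * Kcur L Φ B i Z nu (i.insertNth (b i) x'))
           - (∫ x' in Set.Icc (a ∘ i.succAbove) (b ∘ i.succAbove),
              ∑ B : Fin f, ∑ Z : Fin N, ∑ nu : Fin (Z : ℕ) → Fin (d + 1),
                pds (List.ofFn nu) (δΦ B) (i.insertNth (a i) x')
                  * Kcur L Φ B i Z nu (i.insertNth (a i) x'))) := by

  have hEL_integral : ∫ x in Icc a b, ∑ B, EulerLagrange L Φ B x * δΦ B x = 0 :=
    setIntegral_eq_zero_of_forall_eq_zero fun x hx ↦ by simp [hEL _ x hx]
  have hderiv := (first_variation_of_solution_is_boundary_term_general hL hLsymm hΦ hδΦ hab).deriv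
  rw [hEL_integral, zero_add] at hderiv
  exact hderiv
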